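/- arXiv:1711.00680 — 2 statements merged into one kernel-verified Lean document; each statement's English description precedes it below -/
import Mathlib

section
/- Let A, B, C be nonempty pairwise disjoint sets forming a partition of M ⊆ V, and consider the three conditions: (1) 𝔛_M is strictly collapsible over A into 𝔛_{B∪C} with respect to λ_{B'}^M and λ_{C'}^M for every nonempty B' ⊆ B and nonempty C' ⊆ C; (2) 𝔛_M is strictly collapsible over B into 𝔛_{A∪C} with respect to λ_{A'}^M and λ_{C'}^M for every nonempty A' ⊆ A and nonempty C' ⊆ C; (3) 𝔛_M is strictly collapsible over C into 𝔛_{A∪B} with respect to λ_{A'}^M and λ_{B'}^M for every nonempty A' ⊆ A and nonempty B' ⊆ B. Then for any two distinct conditions among (1), (2), (3), their conjunction holds if and only if X_A, X_B, X_C are mutually independent, i.e., p_M(x) = p_A(x_A)·p_B(x_B)·p_C(x_C) for all x ∈ 𝔛_M. -/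
open Finset

variable {V : Type*} [Fintype V] [DecidableEq V]
variable {𝔛 : V → Type*} [∀ v, Fintype (𝔛 v)] [∀ v, DecidableEq (𝔛 v)]
  [∀ v, Nonempty (𝔛 v)]

/-- The marginal `p_A` of a distribution `p` on the full table, evaluated at the
`A`-coordinates of `x`. -/
noncomputable def margin (p : (∀ v, 𝔛 v) → ℝ) (A : Finset V) (x : ∀ v, 𝔛 v) : ℝ :=
  ∑ y ∈ Finset.univ.filter (fun y : ∀ v, 𝔛 v => ∀ v ∈ A, y v = x v), p y

/-- `ν_L^M(x_L) = (1/|𝔛_{M∖L}|) Σ_{j ∈ 𝔛_M : j_L = x_L} log p_M(j)`, written with sums over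
full configurations (for `L ⊆ M` the extra coordinates cancel against the normalization). -/
noncomputable def nu (p : (∀ v, 𝔛 v) → ℝ) (L M : Finset V) (x : ∀ v, 𝔛 v) : ℝ :=
  (∏ v ∈ Lᶜ, (Fintype.card (𝔛 v) : ℝ))⁻¹ *
    ∑ j ∈ Finset.univ.filter (fun j : ∀ v, 𝔛 v => ∀ v ∈ L, j v = x v),
      Real.log (margin p M j)

/-- The marginal log-linear parameter `λ_L^M(x_L) = Σ_{L' ⊆ L} (−1)^{|L∖L'|} ν_{L'}^M(x_{L'})`. -/
noncomputable def mll (p : (∀ v, 𝔛 v) → ℝ) (L M : Finset V) (x : ∀ v, 𝔛 v) : ℝ :=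
  ∑ L' ∈ L.powerset, (-1 : ℝ) ^ ((L \ L').card) * nu p L' M x

/-- `𝔛_N` is strictly collapsible over `N ∖ M'` into `𝔛_{M'}` with respect to `λ_L^N`:
`λ_L^{M'} = λ_L^N` and `λ_Z^N = 0` for every `Z ⊆ N` with `L ⊊ Z` meeting `N ∖ M'`. -/
def StrictlyCollapsible (p : (∀ v, 𝔛 v) → ℝ) (N M' L : Finset V) : Prop :=
  (∀ x : ∀ v, 𝔛 v, mll p L M' x = mll p L N x) ∧
  (∀ Z ⊆ N, L ⊂ Z → (Z ∩ (N \ M')).Nonempty → ∀ x : ∀ v, 𝔛 v, mll p Z N x = 0)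

/-- Condition: `𝔛_M` is strictly collapsible over `M ∖ Mar` into `𝔛_{Mar}` with respect to
`λ_{S'}^M` for every nonempty `S' ⊆ S` and `λ_{T'}^M` for every nonempty `T' ⊆ T`. -/
def CondOver (p : (∀ v, 𝔛 v) → ℝ) (M Mar S T : Finset V) : Prop :=
  (∀ S' ⊆ S, S'.Nonempty → StrictlyCollapsible p M Mar S') ∧
  (∀ T' ⊆ T, T'.Nonempty → StrictlyCollapsible p M Mar T')

/-!
Each collapsibility condition says that the summed-out block is independent of the other two. On one
side, Möbius inversion gives `log p_M = ∑ Z ⊆ M, λ_Z^M`, and the condition over `R` kills exactly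
the terms with `Z` meeting both `R` and `M ∖ R`, so `p_M` factors over these two blocks. On the
other side, `log p_M = log p_R + log p_{M∖R}` makes `λ^M` additive, and `λ_L^R = 0` unless `L ⊆ R`.
Finally, `A ⊥ B ∪ C` and `B ⊥ A ∪ C` together are mutual independence, since the latter
marginalizes to `B ⊥ C`.

Averages over configurations all have the form of a conditional expectation under the uniform
distribution, for which the tower property and the pull-out property hold.
-/

open scoped BigOperators

section MoebiusTransform

variable {α R : Type*} [DecidableEq α] [Ring R]

/-- The Möbius transform on the lattice of finite subsets of `α`: the function whose sum over the
subsets of `L` is `F L`. -/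
def moebiusTransform (F : Finset α → R) (L : Finset α) : R :=
  ∑ S ∈ L.powerset, (-1) ^ #(L \ S) * F S

lemma moebiusTransform_add (F G : Finset α → R) (L : Finset α) :
    moebiusTransform (fun S ↦ F S + G S) L = moebiusTransform F L + moebiusTransform G L := by
  simp only [moebiusTransform, mul_add, sum_add_distrib]

lemma moebiusTransform_insert (F : Finset α → R) {a : α} {L : Finset α} (ha : a ∉ L) :
    moebiusTransform F (insert a L) =
      moebiusTransform (fun S ↦ F (insert a S)) L - moebiusTransform F L := by
  have without_a : ∀ S ∈ L.powerset,
      (-1) ^ #(insert a L \ S) * F S = -((-1) ^ #(L \ S) * F S) := by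
    intro S hS
    have haS : a ∉ S := fun h ↦ ha (mem_powerset.1 hS h)
    rw [insert_sdiff_of_notMem _ haS, card_insert_of_notMem fun h ↦ ha (mem_sdiff.1 h).1, pow_succ,
      mul_neg_one, neg_mul]
  simp only [moebiusTransform, sum_powerset_insert ha, insert_sdiff_insert,
    sdiff_insert_of_notMem ha]
  rw [sum_congr rfl without_a, sum_neg_distrib, neg_add_eq_sub]

lemma sum_powerset_moebiusTransform (F : Finset α → R) (L : Finset α) :
    ∑ Z ∈ L.powerset, moebiusTransform F Z = F L := by
  induction L using Finset.induction_on generalizing F with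
  | empty => simp [moebiusTransform]
  | insert a L ha ih =>
    have pair : ∀ Z ∈ L.powerset, moebiusTransform F Z + moebiusTransform F (insert a Z) =
        moebiusTransform (fun S ↦ F (insert a S)) Z := fun Z hZ ↦ by
      rw [moebiusTransform_insert F fun h ↦ ha (mem_powerset.1 hZ h), add_sub_cancel]
    rw [sum_powerset_insert ha, ← sum_add_distrib, sum_congr rfl pair, ih]

lemma moebiusTransform_eq_zero {F : Finset α → R} {a : α} (hF : ∀ S, F (insert a S) = F S)
    {L : Finset α} (ha : a ∈ L) : moebiusTransform F L = 0 := by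
  rw [← insert_erase ha, moebiusTransform_insert F (notMem_erase a L)]
  simp only [hF, sub_self]

end MoebiusTransform

section CondMean

variable {ι : Type*} {α : ι → Type*} [DecidableEq ι] [Fintype ι]
  {M : Type*} [AddCommMonoid M] [Module ℚ≥0 M] {K : Type*} [Semifield K] [CharZero K]

-- Swapping the `S`-coordinates of `y` and `z` is a bijection under which `S.piecewise y z` becomes
-- the first component.
lemma expect_piFinset_piecewise (S : Finset ι) (s t : ∀ i, Finset (α i))
    (hs : ∀ i, (s i).Nonempty) (ht : ∀ i, (t i).Nonempty) (f : (∀ i, α i) → M) :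
    𝔼 y ∈ Fintype.piFinset s, 𝔼 z ∈ Fintype.piFinset t, f (S.piecewise y z) =
      𝔼 w ∈ Fintype.piFinset (S.piecewise s t), f w := by
  let swap (q : (∀ i, α i) × (∀ i, α i)) := (S.piecewise q.1 q.2, S.piecewise q.2 q.1)
  have swap_swap (q) : swap (swap q) = q := by
    ext i <;> by_cases hi : i ∈ S <;> simp [swap, hi]
  have swap_mem (q) : swap q ∈ Fintype.piFinset (S.piecewise s t) ×ˢ
      Fintype.piFinset (S.piecewise t s) ↔ q ∈ Fintype.piFinset s ×ˢ Fintype.piFinset t := by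
    simp only [swap, mem_product, Fintype.mem_piFinset, ← forall_and]
    refine forall_congr' fun i ↦ ?_
    by_cases hi : i ∈ S <;> simp [hi, and_comm]
  have snd_nonempty : (Fintype.piFinset (S.piecewise t s)).Nonempty :=
    Fintype.piFinset_nonempty.2 fun i ↦ by by_cases hi : i ∈ S <;> simp [hi, hs i, ht i]
  calc 𝔼 y ∈ Fintype.piFinset s, 𝔼 z ∈ Fintype.piFinset t, f (S.piecewise y z)
      = 𝔼 q ∈ Fintype.piFinset (S.piecewise s t) ×ˢ Fintype.piFinset (S.piecewise t s), f q.1 := by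
        rw [← expect_product']
        exact expect_equiv (Function.Involutive.toPerm swap swap_swap) (fun q ↦ (swap_mem q).symm)
          fun _ _ ↦ rfl
    _ = 𝔼 w ∈ Fintype.piFinset (S.piecewise s t), f w := by
        simp only [expect_product, expect_const snd_nonempty]

variable [∀ i, Fintype (α i)]

/-- The conditional expectation of `f` given the coordinates in `S`, under the uniform distribution
on all configurations. It is a function of full configurations that ignores the coordinates outside
`S`; `condMean ∅ f` is the constant mean of `f`. -/
def condMean (S : Finset ι) (f : (∀ i, α i) → M) (x : ∀ i, α i) : M :=
  𝔼 y, f (S.piecewise x y)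

lemma condMean_add (S : Finset ι) (f g : (∀ i, α i) → M) (x : ∀ i, α i) :
    condMean S (fun y ↦ f y + g y) x = condMean S f x + condMean S g x :=
  expect_add_distrib ..

lemma dependsOn_condMean (S : Finset ι) (f : (∀ i, α i) → M) : DependsOn (condMean S f) S := by
  intro x y hxy
  have hpw (z : ∀ i, α i) : S.piecewise x z = S.piecewise y z :=
    S.piecewise_congr hxy fun _ _ ↦ rfl
  simp only [condMean, hpw]

omit [Fintype ι] [∀ i, Fintype (α i)] in
lemma apply_piecewise_of_dependsOn {β : Type*} {S : Finset ι} {f : (∀ i, α i) → β}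
    (hf : DependsOn f S) (x y : ∀ i, α i) : f (S.piecewise x y) = f x :=
  hf fun _ hi ↦ S.piecewise_eq_of_mem _ _ hi

lemma condMean_mul_left {S : Finset ι} {g : (∀ i, α i) → K} (hg : DependsOn g S)
    (f : (∀ i, α i) → K) (x : ∀ i, α i) :
    condMean S (fun y ↦ g y * f y) x = g x * condMean S f x := by
  simp only [condMean, apply_piecewise_of_dependsOn hg, mul_expect]

lemma condMean_mul_right {S : Finset ι} {g : (∀ i, α i) → K} (hg : DependsOn g S)
    (f : (∀ i, α i) → K) (x : ∀ i, α i) :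
    condMean S (fun y ↦ f y * g y) x = condMean S f x * g x := by
  simp only [mul_comm _ (g _), condMean_mul_left hg]

variable [∀ i, Nonempty (α i)]

lemma sum_filter_eq_smul_condMean [∀ i, DecidableEq (α i)] (S : Finset ι) (f : (∀ i, α i) → M)
    (x : ∀ i, α i) :
    ∑ y with ∀ i ∈ S, y i = x i, f y = (∏ i ∈ Sᶜ, Fintype.card (α i)) • condMean S f x := by
  have fiber : ({y | ∀ i ∈ S, y i = x i} : Finset (∀ i, α i)) =
      Fintype.piFinset (S.piecewise (fun i ↦ {x i}) fun _ ↦ univ) := by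
    ext y
    simp only [mem_filter_univ, Fintype.mem_piFinset]
    refine forall_congr' fun i ↦ ?_
    by_cases hi : i ∈ S <;> simp [hi]
  have card_fiber : #(Fintype.piFinset (S.piecewise (fun i ↦ {x i}) fun _ ↦ univ)) =
      ∏ i ∈ Sᶜ, Fintype.card (α i) := by
    rw [Fintype.card_piFinset]
    refine (prod_subset_one_on_sdiff (subset_univ _) (fun i hi ↦ ?_) fun i hi ↦ ?_).symm
    · have hiS : i ∈ S := by simpa using hi
      simp only [piecewise_eq_of_mem _ _ _ hiS, card_singleton]
    · simp only [piecewise_eq_of_notMem _ _ _ (mem_compl.1 hi), card_univ]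
  rw [fiber, ← card_smul_expect, card_fiber,
    ← expect_piFinset_piecewise S _ _ (fun i ↦ singleton_nonempty (x i)) fun _ ↦ univ_nonempty,
    Fintype.piFinset_singleton, Fintype.piFinset_univ, expect_singleton, condMean]

lemma condMean_of_dependsOn {S : Finset ι} {f : (∀ i, α i) → M} (hf : DependsOn f S) :
    condMean S f = f := by
  funext x
  simp only [condMean, apply_piecewise_of_dependsOn hf, Fintype.expect_const]

lemma condMean_condMean (S T : Finset ι) (f : (∀ i, α i) → M) :
    condMean S (condMean T f) = condMean (S ∩ T) f := by
  funext x
  have regroup (y z : ∀ i, α i) : T.piecewise (S.piecewise x y) z =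
      (S ∩ T).piecewise x (T.piecewise y z) := by
    ext i
    by_cases hS : i ∈ S <;> by_cases hT : i ∈ T <;> simp [hS, hT]
  have := expect_piFinset_piecewise T (fun i ↦ (univ : Finset (α i))) (fun _ ↦ univ)
    (fun _ ↦ univ_nonempty) (fun _ ↦ univ_nonempty) fun w ↦ f ((S ∩ T).piecewise x w)
  simpa only [condMean, regroup, Fintype.piFinset_univ, piecewise_same] using this

lemma condMean_of_dependsOn_of_disjoint {S T : Finset ι} (hST : Disjoint S T)
    {f : (∀ i, α i) → M} (hf : DependsOn f T) : condMean S f = condMean ∅ f := by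
  rw [← condMean_of_dependsOn hf, condMean_condMean, condMean_condMean,
    disjoint_iff_inter_eq_empty.1 hST, empty_inter]

lemma condMean_empty_mul {S T : Finset ι} (hST : Disjoint S T) {f g : (∀ i, α i) → K}
    (hf : DependsOn f S) (hg : DependsOn g T) (x : ∀ i, α i) :
    condMean ∅ (fun y ↦ f y * g y) x = condMean ∅ f x * condMean ∅ g x := by
  have cond_S : condMean S (fun y ↦ f y * g y) = fun y ↦ f y * condMean ∅ g y := by
    funext y
    rw [condMean_mul_left hf, condMean_of_dependsOn_of_disjoint hST hg]
  rw [← empty_inter S, ← condMean_condMean, cond_S, empty_inter,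
    condMean_mul_right (dependsOn_condMean ∅ g)]

end CondMean

section Margin

variable {p : (∀ v, 𝔛 v) → ℝ}

omit [∀ v, Nonempty (𝔛 v)] in
lemma margin_pos (hp : ∀ x, 0 < p x) (S : Finset V) (x : ∀ v, 𝔛 v) : 0 < margin p S x :=
  sum_pos (fun y _ ↦ hp y) ⟨x, by simp⟩

omit [∀ v, Nonempty (𝔛 v)] in
lemma margin_empty (p : (∀ v, 𝔛 v) → ℝ) (x : ∀ v, 𝔛 v) : margin p ∅ x = ∑ y, p y := by
  simp [margin]

lemma margin_eq_mul_condMean (p : (∀ v, 𝔛 v) → ℝ) (S : Finset V) :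
    margin p S = fun x ↦ (∏ v ∈ Sᶜ, (Fintype.card (𝔛 v) : ℝ)) * condMean S p x := by
  funext x
  rw [margin, sum_filter_eq_smul_condMean, nsmul_eq_mul, Nat.cast_prod]

lemma dependsOn_margin (p : (∀ v, 𝔛 v) → ℝ) (S : Finset V) : DependsOn (margin p S) S := by
  intro x y hxy
  simp only [margin_eq_mul_condMean, dependsOn_condMean S p hxy]

lemma margin_eq_mul_condMean_margin (p : (∀ v, 𝔛 v) → ℝ) {S T : Finset V} (hST : S ⊆ T)
    (x : ∀ v, 𝔛 v) :
    margin p S x = (∏ v ∈ T \ S, (Fintype.card (𝔛 v) : ℝ)) * condMean S (margin p T) x := by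
  have compl_eq : Sᶜ \ Tᶜ = T \ S := by simp [sdiff_eq, inter_comm]
  rw [margin_eq_mul_condMean p T, condMean_mul_left ((dependsOn_const _).mono (Set.empty_subset _)),
    condMean_condMean, inter_eq_left.2 hST, margin_eq_mul_condMean, ← mul_assoc,
    ← prod_sdiff (compl_subset_compl.2 hST), compl_eq]

/-- Independence of the blocks of variables `X_A` and `X_B`. -/
def BlockIndep (p : (∀ v, 𝔛 v) → ℝ) (A B : Finset V) : Prop :=
  ∀ x, margin p (A ∪ B) x = margin p A x * margin p B x

/-- Mutual independence of the three blocks of variables `X_A`, `X_B` and `X_C`. -/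
def MutuallyIndep (p : (∀ v, 𝔛 v) → ℝ) (A B C : Finset V) : Prop :=
  ∀ x, margin p (A ∪ B ∪ C) x = margin p A x * margin p B x * margin p C x

lemma blockIndep_of_factorization (hsum : ∑ x, p x = 1) {A B : Finset V} (hAB : Disjoint A B)
    {g h : (∀ v, 𝔛 v) → ℝ} (hg : DependsOn g A) (hh : DependsOn h B)
    (hfac : ∀ x, margin p (A ∪ B) x = g x * h x) : BlockIndep p A B := by
  intro x
  have margin_A : margin p A x =
      (∏ v ∈ B, (Fintype.card (𝔛 v) : ℝ)) * (g x * condMean ∅ h x) := by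
    rw [margin_eq_mul_condMean_margin p subset_union_left, union_sdiff_cancel_left hAB,
      funext hfac, condMean_mul_left hg, condMean_of_dependsOn_of_disjoint hAB hh]
  have margin_B : margin p B x =
      (∏ v ∈ A, (Fintype.card (𝔛 v) : ℝ)) * (condMean ∅ g x * h x) := by
    rw [margin_eq_mul_condMean_margin p subset_union_right, union_sdiff_cancel_right hAB,
      funext hfac, condMean_mul_right hh, condMean_of_dependsOn_of_disjoint hAB.symm hg]
  have total : 1 = (∏ v ∈ A, (Fintype.card (𝔛 v) : ℝ)) * (∏ v ∈ B, (Fintype.card (𝔛 v) : ℝ)) *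
      (condMean ∅ g x * condMean ∅ h x) := by
    rw [← hsum, ← margin_empty p x, margin_eq_mul_condMean_margin p (empty_subset (A ∪ B)),
      sdiff_empty, prod_union hAB, funext hfac, condMean_empty_mul hAB hg hh]
  rw [hfac, margin_A, margin_B]
  linear_combination g x * h x * total

lemma BlockIndep.mono_right {A R S : Finset V} (hAR : Disjoint A R) (hind : BlockIndep p A R)
    (hSR : S ⊆ R) : BlockIndep p A S := by
  intro x
  have summed_out : (A ∪ R) \ (A ∪ S) = R \ S := by
    rw [union_sdiff_distrib, sdiff_eq_empty_iff_subset.2 subset_union_left, empty_union,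
      sdiff_union_distrib, sdiff_eq_self_of_disjoint hAR.symm, inter_eq_right.2 sdiff_subset]
  have inter_R : (A ∪ S) ∩ R = S ∩ R := by
    rw [union_inter_distrib_right, disjoint_iff_inter_eq_empty.1 hAR, empty_union]
  have condMean_R : condMean (A ∪ S) (margin p R) = condMean S (margin p R) := by
    rw [← condMean_of_dependsOn (dependsOn_margin p R), condMean_condMean, condMean_condMean,
      inter_R]
  rw [margin_eq_mul_condMean_margin p (union_subset_union_right hSR), summed_out, funext hind,
    condMean_mul_left ((dependsOn_margin p A).mono (coe_subset.2 subset_union_left)), condMean_R,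
    margin_eq_mul_condMean_margin p hSR, mul_left_comm]

omit [∀ v, Nonempty (𝔛 v)] in
lemma mutuallyIndep_left_comm {A B C : Finset V} :
    MutuallyIndep p B A C ↔ MutuallyIndep p A B C := by
  simp only [MutuallyIndep, union_comm B A, mul_comm (margin p B _)]

omit [∀ v, Nonempty (𝔛 v)] in
lemma mutuallyIndep_right_comm {A B C : Finset V} :
    MutuallyIndep p A C B ↔ MutuallyIndep p A B C := by
  simp only [MutuallyIndep, union_right_comm A C B, mul_right_comm _ (margin p C _)]

lemma MutuallyIndep.blockIndep (hsum : ∑ x, p x = 1) {A B C : Finset V}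
    (hABC : Disjoint A (B ∪ C)) (h : MutuallyIndep p A B C) : BlockIndep p A (B ∪ C) := by
  have dependsOn_BC : DependsOn (fun x ↦ margin p B x * margin p C x) ↑(B ∪ C) :=
    fun _ _ hxy ↦ congrArg₂ (· * ·)
      ((dependsOn_margin p B).mono (coe_subset.2 subset_union_left) hxy)
      ((dependsOn_margin p C).mono (coe_subset.2 subset_union_right) hxy)
  refine blockIndep_of_factorization hsum hABC (dependsOn_margin p A) dependsOn_BC fun x ↦ ?_
  rw [← union_assoc, h x, mul_assoc]

lemma mutuallyIndep_iff (hsum : ∑ x, p x = 1) {A B C : Finset V} (hAB : Disjoint A B)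
    (hAC : Disjoint A C) (hBC : Disjoint B C) :
    MutuallyIndep p A B C ↔ BlockIndep p A (B ∪ C) ∧ BlockIndep p B (A ∪ C) := by
  have hA : Disjoint A (B ∪ C) := disjoint_union_right.2 ⟨hAB, hAC⟩
  have hB : Disjoint B (A ∪ C) := disjoint_union_right.2 ⟨hAB.symm, hBC⟩
  refine ⟨fun h ↦ ⟨h.blockIndep hsum hA, (mutuallyIndep_left_comm.2 h).blockIndep hsum hB⟩, ?_⟩
  rintro ⟨indep_A, indep_B⟩ x
  have indep_BC : BlockIndep p B C := indep_B.mono_right hB subset_union_right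
  rw [union_assoc, indep_A x, indep_BC x, mul_assoc]

end Margin

section LogLinear

variable {p : (∀ v, 𝔛 v) → ℝ}

lemma mll_eq_moebiusTransform (p : (∀ v, 𝔛 v) → ℝ) (L M : Finset V) (x : ∀ v, 𝔛 v) :
    mll p L M x =
      moebiusTransform (fun S ↦ condMean S (fun y ↦ Real.log (margin p M y)) x) L := by
  have nu_eq (S : Finset V) : nu p S M x = condMean S (fun y ↦ Real.log (margin p M y)) x := by
    have card_ne_zero : ∏ v ∈ Sᶜ, (Fintype.card (𝔛 v) : ℝ) ≠ 0 :=
      prod_ne_zero_iff.2 fun v _ ↦ Nat.cast_ne_zero.2 Fintype.card_ne_zero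
    rw [nu, sum_filter_eq_smul_condMean, nsmul_eq_mul, Nat.cast_prod,
      inv_mul_cancel_left₀ card_ne_zero]
  simp only [mll, moebiusTransform, nu_eq]

lemma dependsOn_log_margin (p : (∀ v, 𝔛 v) → ℝ) (M : Finset V) :
    DependsOn (fun x ↦ Real.log (margin p M x)) M :=
  fun _ _ hxy ↦ congrArg Real.log (dependsOn_margin p M hxy)

lemma dependsOn_mll (p : (∀ v, 𝔛 v) → ℝ) (L M : Finset V) : DependsOn (mll p L M) L := by
  intro x y hxy
  simp only [mll_eq_moebiusTransform, moebiusTransform]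
  refine sum_congr rfl fun S hS ↦ ?_
  rw [(dependsOn_condMean S _).mono (coe_subset.2 (mem_powerset.1 hS)) hxy]

lemma sum_powerset_mll (p : (∀ v, 𝔛 v) → ℝ) (M : Finset V) (x : ∀ v, 𝔛 v) :
    ∑ Z ∈ M.powerset, mll p Z M x = Real.log (margin p M x) := by
  simp only [mll_eq_moebiusTransform]
  rw [sum_powerset_moebiusTransform, condMean_of_dependsOn (dependsOn_log_margin p M)]

lemma mll_eq_zero_of_not_subset (p : (∀ v, 𝔛 v) → ℝ) {L M : Finset V} (hLM : ¬ L ⊆ M)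
    (x : ∀ v, 𝔛 v) : mll p L M x = 0 := by
  obtain ⟨a, haL, haM⟩ := not_subset.1 hLM
  rw [mll_eq_moebiusTransform]
  refine moebiusTransform_eq_zero (fun S ↦ ?_) haL
  rw [← condMean_of_dependsOn (dependsOn_log_margin p M), condMean_condMean, condMean_condMean,
    insert_inter_of_notMem haM]

lemma BlockIndep.mll_union (hp : ∀ x, 0 < p x) {A B : Finset V} (hind : BlockIndep p A B)
    (L : Finset V) (x : ∀ v, 𝔛 v) : mll p L (A ∪ B) x = mll p L A x + mll p L B x := by
  have log_margin (y : ∀ v, 𝔛 v) : Real.log (margin p (A ∪ B) y) =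
      Real.log (margin p A y) + Real.log (margin p B y) := by
    rw [hind y, Real.log_mul (margin_pos hp A y).ne' (margin_pos hp B y).ne']
  simp only [mll_eq_moebiusTransform, log_margin, condMean_add, moebiusTransform_add]

lemma blockIndep_of_mll_eq_zero (hp : ∀ x, 0 < p x) (hsum : ∑ x, p x = 1) {A B : Finset V}
    (hAB : Disjoint A B)
    (hmll : ∀ Z ⊆ A ∪ B, ¬ Z ⊆ A → ¬ Z ⊆ B → ∀ x, mll p Z (A ∪ B) x = 0) :
    BlockIndep p A B := by
  have dependsOn_A : DependsOn
      (fun x ↦ Real.exp (∑ Z ∈ (A ∪ B).powerset with Z ⊆ A, mll p Z (A ∪ B) x)) A := by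
    refine fun x y hxy ↦ congrArg Real.exp (sum_congr rfl fun Z hZ ↦ ?_)
    exact (dependsOn_mll p Z _).mono (coe_subset.2 (mem_filter.1 hZ).2) hxy
  have dependsOn_B : DependsOn
      (fun x ↦ Real.exp (∑ Z ∈ (A ∪ B).powerset with ¬ Z ⊆ A, mll p Z (A ∪ B) x)) B := by
    refine fun x y hxy ↦ congrArg Real.exp (sum_congr rfl fun Z hZ ↦ ?_)
    obtain ⟨hZAB, hZA⟩ := mem_filter.1 hZ
    by_cases hZB : Z ⊆ B
    · exact (dependsOn_mll p Z _).mono (coe_subset.2 hZB) hxy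
    · simp only [hmll Z (mem_powerset.1 hZAB) hZA hZB]
  refine blockIndep_of_factorization hsum hAB dependsOn_A dependsOn_B fun x ↦ ?_
  rw [← Real.exp_add, sum_filter_add_sum_filter_not, sum_powerset_mll,
    Real.exp_log (margin_pos hp _ x)]

lemma BlockIndep.strictlyCollapsible (hp : ∀ x, 0 < p x) {R N L : Finset V} (hRN : Disjoint R N)
    (hind : BlockIndep p R N) (hL : L.Nonempty) (hLN : L ⊆ N) :
    StrictlyCollapsible p (R ∪ N) N L := by
  obtain ⟨l, hl⟩ := hL
  have not_subset_R {Z : Finset V} (hLZ : L ⊆ Z) : ¬ Z ⊆ R := fun hZR ↦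
    disjoint_left.1 hRN (hZR (hLZ hl)) (hLN hl)
  refine ⟨fun x ↦ ?_, fun Z _ hLZ ⟨a, ha⟩ x ↦ ?_⟩
  · rw [hind.mll_union hp, mll_eq_zero_of_not_subset p (not_subset_R Subset.rfl), zero_add]
  · obtain ⟨haZ, ha⟩ := mem_inter.1 ha
    have not_subset_N : ¬ Z ⊆ N := fun hZN ↦ (mem_sdiff.1 ha).2 (hZN haZ)
    rw [hind.mll_union hp, mll_eq_zero_of_not_subset p (not_subset_R hLZ.subset),
      mll_eq_zero_of_not_subset p not_subset_N, zero_add]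

omit [∀ v, Nonempty (𝔛 v)] in
lemma CondOver.mll_eq_zero {M S T Z : Finset V} (h : CondOver p M (S ∪ T) S T) (hZM : Z ⊆ M)
    (hZST : ¬ Z ⊆ S ∪ T) (hZ : (Z ∩ (S ∪ T)).Nonempty) (x : ∀ v, 𝔛 v) : mll p Z M x = 0 := by
  obtain ⟨a, haZ, haST⟩ := not_subset.1 hZST
  obtain ⟨b, hb⟩ := hZ
  obtain ⟨hbZ, hbST⟩ := mem_inter.1 hb
  have collapsible : StrictlyCollapsible p M (S ∪ T) {b} := by
    rcases mem_union.1 hbST with hbS | hbT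
    · exact h.1 {b} (singleton_subset_iff.2 hbS) (singleton_nonempty b)
    · exact h.2 {b} (singleton_subset_iff.2 hbT) (singleton_nonempty b)
  have ssubset_Z : {b} ⊂ Z := (ssubset_iff_of_subset (singleton_subset_iff.2 hbZ)).2
    ⟨a, haZ, fun hab ↦ haST (mem_singleton.1 hab ▸ hbST)⟩
  exact collapsible.2 Z hZM ssubset_Z ⟨a, mem_inter.2 ⟨haZ, mem_sdiff.2 ⟨hZM haZ, haST⟩⟩⟩ x

theorem condOver_iff_blockIndep (hp : ∀ x, 0 < p x) (hsum : ∑ x, p x = 1) {M R S T : Finset V}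
    (hRS : Disjoint R S) (hRT : Disjoint R T) (hM : M = R ∪ (S ∪ T)) :
    CondOver p M (S ∪ T) S T ↔ BlockIndep p R (S ∪ T) := by
  subst hM
  have hR : Disjoint R (S ∪ T) := disjoint_union_right.2 ⟨hRS, hRT⟩
  refine ⟨fun h ↦ blockIndep_of_mll_eq_zero hp hsum hR fun Z hZ hZR hZST ↦
    h.mll_eq_zero hZ hZST ?_, fun h ↦ ⟨fun S' hS' hne ↦ ?_, fun T' hT' hne ↦ ?_⟩⟩
  · obtain ⟨a, haZ, haR⟩ := not_subset.1 hZR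
    exact ⟨a, mem_inter.2 ⟨haZ, (mem_union.1 (hZ haZ)).resolve_left haR⟩⟩
  · exact h.strictlyCollapsible hp hR hne (hS'.trans subset_union_left)
  · exact h.strictlyCollapsible hp hR hne (hT'.trans subset_union_right)

end LogLinear

theorem stmt15 (p : (∀ v, 𝔛 v) → ℝ) (hp : ∀ x, 0 < p x) (hsum : ∑ x, p x = 1)
    (A B C M : Finset V) (hA : A.Nonempty) (hB : B.Nonempty) (hC : C.Nonempty)
    (hAB : Disjoint A B) (hAC : Disjoint A C) (hBC : Disjoint B C)
    (hM : M = A ∪ B ∪ C) :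
    ((CondOver p M (B ∪ C) B C ∧ CondOver p M (A ∪ C) A C) ↔
      (∀ x : ∀ v, 𝔛 v,
        margin p M x = margin p A x * margin p B x * margin p C x)) ∧
    ((CondOver p M (B ∪ C) B C ∧ CondOver p M (A ∪ B) A B) ↔
      (∀ x : ∀ v, 𝔛 v,
        margin p M x = margin p A x * margin p B x * margin p C x)) ∧
    ((CondOver p M (A ∪ C) A C ∧ CondOver p M (A ∪ B) A B) ↔
      (∀ x : ∀ v, 𝔛 v,
        margin p M x = margin p A x * margin p B x * margin p C x)) := by
  subst hM
  have over_A := condOver_iff_blockIndep hp hsum hAB hAC (union_assoc A B C)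
  have over_B := condOver_iff_blockIndep hp hsum hAB.symm hBC
    ((congrArg (· ∪ C) (union_comm A B)).trans (union_assoc B A C))
  have over_C := condOver_iff_blockIndep hp hsum hAC.symm hBC.symm (union_comm (A ∪ B) C)
  have indep_AB := mutuallyIndep_iff hsum hAB hAC hBC
  have indep_AC := mutuallyIndep_iff hsum hAC hAB hBC.symm
  have indep_BC := mutuallyIndep_iff hsum hBC hAB.symm hAC.symm
  rw [mutuallyIndep_right_comm, union_comm C B] at indep_AC
  rw [mutuallyIndep_right_comm, mutuallyIndep_left_comm, union_comm C A, union_comm B A] at indep_BC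
  rw [over_A, over_B, over_C]
  exact ⟨indep_AB.symm, indep_AC.symm, indep_BC.symm⟩
end

section
/- Let A and B be disjoint nonempty subsets of V with |𝔛_v| ≥ 2 for all v ∈ V, and let ∅ ≠ L ⊆ B. For x_L ∈ 𝔛_L define f_L(x_L) = Σ_{L' ⊆ L} (−1)^{|L∖L'|} (1/|𝔛_{(A∪B)∖L'}|) Σ_{j ∈ 𝔛_{A∪B} : j_{L'} = x_{L'}} log( p_{A∪B}(j) / p_B(j_B) ). Then: (a) λ_L^{A∪B}(x_L) = λ_L^B(x_L) + f_L(x_L) for all x_L ∈ 𝔛_L; and (b) if there exists v ∈ L such that X_A ⟂ X_v | X_{B∖{v}}, then f_L(x_L) = 0 for all x_L, so that λ_L^{A∪B}(x_L) = λ_L^B(x_L) for all x_L. -/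
open Finset

variable {V : Type*} [Fintype V] [DecidableEq V]
variable {𝔛 : V → Type*} [∀ v, Fintype (𝔛 v)] [∀ v, DecidableEq (𝔛 v)]
  [∀ v, Nonempty (𝔛 v)]

/-- `X_A ⟂ X_B | X_C`: `p_{A∪B∪C}·p_C = p_{A∪C}·p_{B∪C}` pointwise. -/
def CondIndep (p : (∀ v, 𝔛 v) → ℝ) (A B C : Finset V) : Prop :=
  ∀ x : ∀ v, 𝔛 v,
    margin p (A ∪ B ∪ C) x * margin p C x = margin p (A ∪ C) x * margin p (B ∪ C) x

/-- `f_L(x_L) = Σ_{L' ⊆ L} (−1)^{|L∖L'|} (1/|𝔛_{(A∪B)∖L'}|)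
Σ_{j ∈ 𝔛_{A∪B} : j_{L'} = x_{L'}} log(p_{A∪B}(j)/p_B(j_B))`, written with sums over full
configurations (for `L' ⊆ A ∪ B` the extra coordinates cancel against the normalization). -/
noncomputable def fpar (p : (∀ v, 𝔛 v) → ℝ) (A B L : Finset V) (x : ∀ v, 𝔛 v) : ℝ :=
  ∑ L' ∈ L.powerset, (-1 : ℝ) ^ ((L \ L').card) *
    ((∏ v ∈ L'ᶜ, (Fintype.card (𝔛 v) : ℝ))⁻¹ *
      ∑ j ∈ Finset.univ.filter (fun j : ∀ v, 𝔛 v => ∀ v ∈ L', j v = x v),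
        Real.log (margin p (A ∪ B) j / margin p B j))

/-!
Both `λ_L^M` and `f_L` are Möbius inversions, over the subsets `T` of `L`, of the averages of a
function `g` over the cells `{j : j_T = x_T}`, with `g = log p_M` and `g = log (p_{A ∪ B} / p_B)`
respectively. This inversion is linear in `g`, so (a) is the logarithm of
`p_{A ∪ B} = p_B · (p_{A ∪ B} / p_B)`. If `g` does not depend on some coordinate `v ∈ L`, then `T`
and `T ∪ {v}` give equal averages with opposite signs, so the inversion vanishes; conditional
independence makes the conditional probabilities `p_{A ∪ B} / p_B` independent of `x_v`, whence (b).
-/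

section MarginalLogLinear

open scoped BigOperators

variable {ι : Type*} [Fintype ι] [DecidableEq ι]
variable {α : ι → Type*} [∀ i, Fintype (α i)] [∀ i, DecidableEq (α i)]

/-- The cell `{j : j_T = x_T}` of the configurations agreeing with `x` on `T`, over which the
logarithms are averaged. -/
def cylinder (T : Finset ι) (x : ∀ i, α i) : Finset (∀ i, α i) :=
  {j | ∀ i ∈ T, j i = x i}

theorem mem_cylinder {T : Finset ι} {x j : ∀ i, α i} :
    j ∈ cylinder T x ↔ ∀ i ∈ T, j i = x i := by
  simp only [cylinder, mem_filter_univ]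

theorem card_cylinder (T : Finset ι) (x : ∀ i, α i) :
    #(cylinder T x) = ∏ i ∈ Tᶜ, Fintype.card (α i) := by
  have cylinder_eq_piFinset :
      cylinder T x = Fintype.piFinset fun i => if i ∈ T then {x i} else univ := by
    ext j
    simp only [mem_cylinder, Fintype.mem_piFinset]
    refine forall_congr' fun i => ?_
    split_ifs with hi <;> simp [hi]
  rw [cylinder_eq_piFinset, Fintype.card_piFinset, ← prod_mul_prod_compl T]
  rw [prod_eq_one fun i hi => by simp [hi], one_mul]
  exact prod_congr rfl fun i hi => by simp [mem_compl.mp hi]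

variable {E : Type*} [AddCommGroup E] [Module ℚ≥0 E] {g : (∀ i, α i) → E}

theorem expect_cylinder_insert {s : Set ι} (hg : DependsOn g s) {v : ι} (hvs : v ∉ s)
    {T : Finset ι} (hvT : v ∉ T) (x : ∀ i, α i) :
    𝔼 j ∈ cylinder (insert v T) x, g j = 𝔼 j ∈ cylinder T x, g j := by
  have : Nonempty (α v) := ⟨x v⟩
  have update_mem {j : ∀ i, α i} (hj : ∀ i ∈ T, j i = x i) (a : α v) :
      ∀ i ∈ T, Function.update j v a i = x i := fun i hi => by
    rw [Function.update_of_ne (ne_of_mem_of_not_mem hi hvT), hj i hi]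
  calc 𝔼 j ∈ cylinder (insert v T) x, g j
      = 𝔼 j ∈ cylinder (insert v T) x, 𝔼 _a : α v, g j := by
        simp only [expect_const univ_nonempty]
    _ = 𝔼 q ∈ cylinder (insert v T) x ×ˢ (univ : Finset (α v)), g q.1 :=
        (expect_product _ _ fun q : (∀ i, α i) × α v => g q.1).symm
    _ = 𝔼 j ∈ cylinder T x, g j := by
        refine expect_nbij' (fun q => Function.update q.1 v q.2)
          (fun j => (Function.update j v (x v), j v)) ?_ ?_ ?_ ?_ ?_
        · intro q hq
          simp only [mem_product, mem_cylinder, forall_mem_insert, mem_univ, and_true] at hq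
          exact mem_cylinder.mpr (update_mem hq.2 q.2)
        · intro j hj
          simpa [mem_cylinder] using update_mem (mem_cylinder.mp hj) (x v)
        · intro q hq
          simp only [mem_product, mem_cylinder, forall_mem_insert, mem_univ, and_true] at hq
          simp [← hq.1]
        · simp
        · intro q _
          exact hg fun i hi =>
            (Function.update_of_ne (ne_of_mem_of_not_mem hi hvs) q.2 q.1).symm

/-- The interaction term of `g` indexed by `L`: the Möbius inversion over subsets of `L` of the
averages of `g` over cells. Taking `g = log p_M` gives the MLL parameter `λ_L^M`, and taking
`g = log (p_{A ∪ B} / p_B)` gives `f_L`. -/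
def interaction (g : (∀ i, α i) → E) (L : Finset ι) (x : ∀ i, α i) : E :=
  ∑ T ∈ L.powerset, (-1 : ℤ) ^ #(L \ T) • 𝔼 j ∈ cylinder T x, g j

theorem interaction_add (g h : (∀ i, α i) → E) (L : Finset ι) (x : ∀ i, α i) :
    interaction (g + h) L x = interaction g L x + interaction h L x := by
  simp only [interaction, Pi.add_apply, expect_add_distrib, smul_add, sum_add_distrib]

theorem interaction_eq_zero_of_dependsOn {s : Set ι} (hg : DependsOn g s) {L : Finset ι}
    (hLs : ¬ (L : Set ι) ⊆ s) (x : ∀ i, α i) : interaction g L x = 0 := by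
  obtain ⟨v, hvL, hvs⟩ := Set.not_subset.mp hLs
  have hvL : v ∈ L := hvL
  rw [interaction, ← insert_erase hvL, sum_powerset_insert (notMem_erase v L),
    insert_erase hvL, ← sum_add_distrib]
  refine sum_eq_zero fun T hT => ?_
  have hvT : v ∉ T := fun h => notMem_erase v L (mem_powerset.mp hT h)
  have card_sdiff_eq : #(L \ T) = #(L \ insert v T) + 1 := by
    rw [sdiff_insert, card_erase_add_one (mem_sdiff.mpr ⟨hvL, hvT⟩)]
  rw [expect_cylinder_insert hg hvs hvT, card_sdiff_eq, pow_succ, mul_neg_one, neg_smul,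
    neg_add_cancel]

theorem interaction_eq_sum_mul {K : Type*} [Field K] [CharZero K] (g : (∀ i, α i) → K)
    (L : Finset ι) (x : ∀ i, α i) :
    interaction g L x = ∑ T ∈ L.powerset, (-1 : K) ^ #(L \ T) *
      ((∏ i ∈ Tᶜ, (Fintype.card (α i) : K))⁻¹ * ∑ j with ∀ i ∈ T, j i = x i, g j) := by
  refine sum_congr rfl fun T _ => ?_
  rw [expect_eq_sum_div_card, card_cylinder, div_eq_inv_mul, zsmul_eq_mul]
  push_cast
  rfl

variable {p : (∀ i, α i) → ℝ}

theorem margin_pos_s17 (hp : ∀ x, 0 < p x) (A : Finset ι) (x : ∀ i, α i) : 0 < margin p A x :=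
  sum_pos (fun y _ => hp y) ⟨x, by simp⟩

theorem dependsOn_margin_s17 (p : (∀ i, α i) → ℝ) (A : Finset ι) : DependsOn (margin p A) A := by
  intro x y hxy
  refine sum_congr (filter_congr fun z _ => forall₂_congr fun i hi => ?_) fun _ _ => rfl
  rw [hxy i hi]

theorem CondIndep.margin_div_margin_eq {A B C : Finset ι} (h : CondIndep p A B C)
    (hp : ∀ x, 0 < p x) (x : ∀ i, α i) :
    margin p (A ∪ (B ∪ C)) x / margin p (B ∪ C) x = margin p (A ∪ C) x / margin p C x := by
  rw [div_eq_div_iff (margin_pos_s17 hp _ x).ne' (margin_pos_s17 hp _ x).ne', ← union_assoc]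
  exact h x

theorem CondIndep.dependsOn_log_margin_div {A B C : Finset ι} (h : CondIndep p A B C)
    (hp : ∀ x, 0 < p x) :
    DependsOn (fun x => Real.log (margin p (A ∪ (B ∪ C)) x / margin p (B ∪ C) x))
      (A ∪ C : Finset ι) := by
  intro x y hxy
  have hC : margin p C x = margin p C y :=
    dependsOn_margin_s17 p C fun i hi => hxy i (mem_union_right A hi)
  simp only [h.margin_div_margin_eq hp, dependsOn_margin_s17 p (A ∪ C) hxy, hC]

theorem mll_eq_interaction (p : (∀ i, α i) → ℝ) (L M : Finset ι) (x : ∀ i, α i) :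
    mll p L M x = interaction (fun j => Real.log (margin p M j)) L x :=
  (interaction_eq_sum_mul _ L x).symm

theorem fpar_eq_interaction (p : (∀ i, α i) → ℝ) (A B L : Finset ι) (x : ∀ i, α i) :
    fpar p A B L x =
      interaction (fun j => Real.log (margin p (A ∪ B) j / margin p B j)) L x :=
  (interaction_eq_sum_mul _ L x).symm

theorem mll_union_eq_mll_add_fpar (hp : ∀ x, 0 < p x) (A B L : Finset ι) (x : ∀ i, α i) :
    mll p L (A ∪ B) x = mll p L B x + fpar p A B L x := by
  rw [mll_eq_interaction, mll_eq_interaction, fpar_eq_interaction, ← interaction_add]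
  congr 1
  ext j
  rw [Pi.add_apply, Real.log_div (margin_pos_s17 hp _ j).ne' (margin_pos_s17 hp _ j).ne',
    add_sub_cancel]

theorem CondIndep.fpar_eq_zero {A B C L : Finset ι} (h : CondIndep p A B C)
    (hp : ∀ x, 0 < p x) (hL : ¬ L ⊆ A ∪ C) (x : ∀ i, α i) : fpar p A (B ∪ C) L x = 0 := by
  rw [fpar_eq_interaction]
  exact interaction_eq_zero_of_dependsOn (h.dependsOn_log_margin_div hp) (mod_cast hL) x

theorem stmt17_general (p : (∀ i, α i) → ℝ) (hp : ∀ x, 0 < p x) (A B L : Finset ι) :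
    (∀ x : ∀ i, α i, mll p L (A ∪ B) x = mll p L B x + fpar p A B L x) ∧
    ∀ C ⊆ B, CondIndep p A C (B \ C) → ¬ L ⊆ A ∪ B \ C →
      ∀ x : ∀ i, α i, fpar p A B L x = 0 ∧ mll p L (A ∪ B) x = mll p L B x := by
  refine ⟨mll_union_eq_mll_add_fpar hp A B L, fun C hCB hC hL x => ?_⟩
  have fpar_eq_zero : fpar p A B L x = 0 := by
    simpa only [union_sdiff_of_subset hCB] using hC.fpar_eq_zero hp hL x
  exact ⟨fpar_eq_zero, by rw [mll_union_eq_mll_add_fpar hp, fpar_eq_zero, add_zero]⟩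

end MarginalLogLinear

theorem stmt17 (p : (∀ v, 𝔛 v) → ℝ) (hp : ∀ x, 0 < p x) (hsum : ∑ x, p x = 1)
    (hcard : ∀ v : V, 2 ≤ Fintype.card (𝔛 v))
    (A B L : Finset V) (hA : A.Nonempty) (hB : B.Nonempty) (hAB : Disjoint A B)
    (hL : L.Nonempty) (hLB : L ⊆ B) :
    (∀ x : ∀ v, 𝔛 v, mll p L (A ∪ B) x = mll p L B x + fpar p A B L x) ∧
    ((∃ v ∈ L, CondIndep p A {v} (B \ {v})) →
      ∀ x : ∀ v, 𝔛 v, fpar p A B L x = 0 ∧ mll p L (A ∪ B) x = mll p L B x) := by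
  refine ⟨(stmt17_general p hp A B L).1, fun ⟨v, hvL, hv⟩ =>
    (stmt17_general p hp A B L).2 {v} (singleton_subset_iff.mpr (hLB hvL)) hv fun hL' => ?_⟩
  simpa [disjoint_right.mp hAB (hLB hvL)] using hL' hvL
end
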